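/- arXiv:1512.01500 — 2 statements merged into one kernel-verified Lean document; each statement's English description precedes it below -/
import Mathlib

section
/- Let G be a group generated by a finite symmetric set S, and suppose G has Kazhdan's property (T). Then there is r > 0 (one may take r = c²/(4π) for a Kazhdan constant c) with the following property: for every ergodic measure-preserving G-action T on a standard probability space (X, μ), every closed subgroup K of the circle group 𝕋 = ℝ/ℤ, and every K-valued 1-cocycle α ∈ Z^1(T, μ, K) with ‖α‖_{μ,S} ≤ r, α is a 1-coboundary, i.e., α ∈ B^1(T, μ, K). -/
open MeasureTheory Filter Topology
open scoped ENNReal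

/-- Property (T) for the group `G` with respect to the finite generating set `S`: there is
`c > 0` such that any unitary representation with a `(S, c)`-invariant unit vector has a
nonzero invariant vector. -/
def HasPropertyT (G : Type*) [Group G] (S : Finset G) : Prop :=
  ∃ c : ℝ, 0 < c ∧
    ∀ (H : Type) (_ : NormedAddCommGroup H) (_ : InnerProductSpace ℂ H) (_ : CompleteSpace H),
      ∀ π : G →* (H ≃ₗᵢ[ℂ] H),
        (∃ v : H, ‖v‖ = 1 ∧ ∀ s ∈ S, ‖π s v - v‖ ≤ c) →
        ∃ w : H, w ≠ 0 ∧ ∀ g : G, π g w = w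

/-- A measure-preserving left action of `G` on `(X, μ)`. -/
def IsMPAction {G : Type*} [Group G] {X : Type*} [MeasurableSpace X]
    (T : G → X → X) (μ : Measure X) : Prop :=
  (∀ g, Measurable (T g)) ∧ (∀ g, Measure.map (T g) μ = μ) ∧
    T 1 = id ∧ ∀ g h, T (g * h) = T g ∘ T h

/-- Ergodicity: every strictly invariant measurable set is null or conull. -/
def IsErgodicAction {G : Type*} [Group G] {X : Type*} [MeasurableSpace X]
    (T : G → X → X) (μ : Measure X) : Prop :=
  ∀ A : Set X, MeasurableSet A → (∀ g, T g ⁻¹' A = A) → μ A = 0 ∨ μ A = 1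

/-- The sum `α(w, x)` of the cochain `α` along the word `w = s_ℓ ⋯ s_1` (the list is read with
its head the last letter applied): `α(w,x) = α(s_1,x) + α(s_2, T^{s_1}x) + ⋯`. -/
noncomputable def cocycleSum {G X : Type*} [Group G] (T : G → X → X)
    (α : G → X → UnitAddCircle) : List G → X → UnitAddCircle
  | [], _ => 0
  | s :: w, x => cocycleSum T α w x + α s (T w.prod x)

/-- `α` is a `K`-valued 1-cocycle over the system `(X, μ, T)` with respect to the generating
set `S`: it is measurable, `K`-valued, and its 2-coboundary vanishes along every relation. -/
def IsCocycle {G : Type*} [Group G] {X : Type*} [MeasurableSpace X] (S : Finset G)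
    (T : G → X → X) (μ : Measure X) (K : AddSubgroup UnitAddCircle)
    (α : G → X → UnitAddCircle) : Prop :=
  (∀ s ∈ S, Measurable (α s)) ∧ (∀ s ∈ S, ∀ x, α s x ∈ K) ∧
  ∀ w : List G, (∀ s ∈ w, s ∈ S) → w.prod = 1 → ∀ᵐ x ∂μ, cocycleSum T α w x = 0

/-!
For a cocycle `a`, the formula `(π(g) f)(x) = e(a(g⁻¹, x)) f(g⁻¹ x)`, with `e(t) = exp(2πit)`,
defines a unitary representation on `L²(μ)`. Since `|e(t) - 1|² ≤ 2 · 2π|t|`, the vector `1` is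
displaced by each `s ∈ S` by at most `(4π ∫ |a(s, ·)|)^(1/2)`, so property (T) yields an invariant
`f ≠ 0` as soon as `a` is small. Ergodicity makes `f` nonzero almost everywhere, and its phase
exhibits `a` as the coboundary of some `β : X → 𝕋`. If `a` takes values in `K`, then `β` is
invariant modulo `K`, hence by ergodicity `β` is a.e. in a single coset `b + K`, and `a` is also
the coboundary of the `K`-valued `β - b`.
-/

universe u

section Words

theorem submonoidClosure_eq_top_of_inv_mem {G : Type*} [Group G] {S : Set G}
    (hsym : ∀ s ∈ S, s⁻¹ ∈ S) (hgen : Subgroup.closure S = ⊤) : Submonoid.closure S = ⊤ := by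
  have hS : S ∪ S⁻¹ = S := Set.union_eq_left.2 fun s hs => by simpa using hsym _ hs
  rw [← hS, ← Subgroup.closure_toSubmonoid, hgen, Subgroup.top_toSubmonoid]

theorem countable_of_submonoidClosure_eq_top {M : Type*} [Monoid M] {S : Set M} [Countable S]
    (hgen : Submonoid.closure S = ⊤) : Countable M := by
  have hsurj : Function.Surjective (FreeMonoid.lift ((↑) : S → M)) := by
    rw [← MonoidHom.mrange_eq_top, ← Submonoid.closure_eq_mrange, hgen]
  exact hsurj.countable

theorem exists_list_prod_eq_of_submonoidClosure_eq_top {M : Type*} [Monoid M] {S : Set M}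
    (hgen : Submonoid.closure S = ⊤) (g : M) : ∃ w : List M, (∀ s ∈ w, s ∈ S) ∧ w.prod = g :=
  Submonoid.exists_list_of_mem_closure (hgen ▸ Submonoid.mem_top g)

end Words

section CocycleExtension

variable {G X : Type*} [Group G] {T : G → X → X} {α : G → X → UnitAddCircle}

theorem cocycleSum_append (hT : ∀ g h, T (g * h) = T g ∘ T h) (v w : List G) (x : X) :
    cocycleSum T α (v ++ w) x = cocycleSum T α w x + cocycleSum T α v (T w.prod x) := by
  induction v with
  | nil => simp [cocycleSum]
  | cons s v ih => simp [cocycleSum, ih, hT, add_assoc]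

theorem cocycleSum_mem {K : AddSubgroup UnitAddCircle} {w : List G}
    (hα : ∀ s ∈ w, ∀ x, α s x ∈ K) (x : X) : cocycleSum T α w x ∈ K := by
  induction w with
  | nil => exact K.zero_mem
  | cons s w ih =>
    rw [List.forall_mem_cons] at hα
    exact K.add_mem (ih hα.2) (hα.1 _)

variable [MeasurableSpace X]

theorem measurable_cocycleSum (hT : ∀ g, Measurable (T g)) {w : List G}
    (hα : ∀ s ∈ w, Measurable (α s)) : Measurable (cocycleSum T α w) := by
  induction w with
  | nil => exact measurable_const
  | cons s w ih =>
    rw [List.forall_mem_cons] at hα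
    exact (ih hα.2).add (hα.1.comp (hT _))

variable {S : Finset G} {μ : Measure X} {K : AddSubgroup UnitAddCircle}

theorem IsCocycle.cocycleSum_ae_eq (hα : IsCocycle S T μ K α)
    (hgen : Submonoid.closure (S : Set G) = ⊤) (hT : ∀ g h, T (g * h) = T g ∘ T h)
    {w w' : List G} (hw : ∀ s ∈ w, s ∈ S) (hw' : ∀ s ∈ w', s ∈ S) (hprod : w.prod = w'.prod) :
    cocycleSum T α w =ᵐ[μ] cocycleSum T α w' := by
  obtain ⟨v, hv, hv_prod⟩ := exists_list_prod_eq_of_submonoidClosure_eq_top hgen w.prod⁻¹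
  have relation : ∀ w₀ : List G, (∀ s ∈ w₀, s ∈ S) → w₀.prod = w.prod →
      ∀ᵐ x ∂μ, cocycleSum T α w₀ x + cocycleSum T α v (T w.prod x) = 0 := by
    intro w₀ hw₀ hw₀_prod
    filter_upwards [hα.2.2 (v ++ w₀) (List.forall_mem_append.2 ⟨hv, hw₀⟩)
      (by rw [List.prod_append, hv_prod, hw₀_prod, inv_mul_cancel])] with x hx
    rwa [cocycleSum_append hT, hw₀_prod] at hx
  filter_upwards [relation w hw rfl, relation w' hw' hprod.symm] with x hx hx'
  exact add_right_cancel (hx.trans hx'.symm)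

theorem IsCocycle.exists_extension (hα : IsCocycle S T μ K α)
    (hgen : Submonoid.closure (S : Set G) = ⊤) (hT : IsMPAction T μ) :
    ∃ a : G → X → UnitAddCircle, (∀ g, Measurable (a g)) ∧ (∀ g x, a g x ∈ K) ∧
      (∀ g h, ∀ᵐ x ∂μ, a (g * h) x = a h x + a g (T h x)) ∧ ∀ s ∈ S, a s =ᵐ[μ] α s := by
  obtain ⟨hT_meas, -, hT_one, hT_mul⟩ := hT
  choose word word_mem word_prod using exists_list_prod_eq_of_submonoidClosure_eq_top hgen
  refine ⟨fun g => cocycleSum T α (word g), fun g => ?_, fun g => ?_, fun g h => ?_,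
    fun s hs => ?_⟩
  · exact measurable_cocycleSum hT_meas fun s hs => hα.1 s (word_mem g s hs)
  · exact cocycleSum_mem fun s hs => hα.2.1 s (word_mem g s hs)
  · filter_upwards [hα.cocycleSum_ae_eq hgen hT_mul (word_mem (g * h))
      (List.forall_mem_append.2 ⟨word_mem g, word_mem h⟩)
      (by simp only [List.prod_append, word_prod])] with x hx
    rw [hx, cocycleSum_append hT_mul, word_prod]
  · filter_upwards [hα.cocycleSum_ae_eq hgen hT_mul (word_mem s) (w' := [s])
      (by simpa using hs) (by simp only [List.prod_singleton, word_prod])] with x hx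
    simp [hx, cocycleSum, hT_one]

end CocycleExtension

section Ergodicity

variable {G X : Type*} [MeasurableSpace X] {μ : Measure X}

/-- The group action encoded by the family of maps `T`, with `g • x = T g x`. -/
@[reducible]
def IsMPAction.mulAction [Group G] {T : G → X → X} (hT : IsMPAction T μ) : MulAction G X where
  smul := T
  one_smul x := congrFun hT.2.2.1 x
  mul_smul g h x := congrFun (hT.2.2.2 g h) x

/-- An a.e. invariant `A` agrees a.e. with the strictly invariant `⋂ g, g⁻¹ A`. -/
theorem IsErgodicAction.ergodicSMul [Group G] [Countable G] [MulAction G X]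
    [MeasurableConstSMul G X] [SMulInvariantMeasure G X μ] [IsProbabilityMeasure μ]
    (hE : IsErgodicAction (fun (g : G) (x : X) => g • x) μ) : ErgodicSMul G X μ where
  aeconst_of_forall_preimage_smul_ae_eq {A} hA hinv := by
    let B : Set X := ⋂ g : G, (g • ·) ⁻¹' A
    have hB : MeasurableSet B := .iInter fun g => measurable_const_smul g hA
    have hB_inv : ∀ g : G, (g • ·) ⁻¹' B = B := fun g => by
      simp only [B, Set.preimage_iInter, Set.preimage_preimage, smul_smul]
      exact (Equiv.mulRight g).surjective.iInter_comp fun k => (k • ·) ⁻¹' A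
    have hBA : B =ᵐ[μ] A := by
      filter_upwards [ae_all_iff.2 fun g => (hinv g).mem_iff] with x hx
      exact propext (Set.mem_iInter.trans ((forall_congr' hx).trans (forall_const G)))
    refine EventuallyConst.congr (eventuallyConst_set.2 ?_) hBA
    rcases hE B hB hB_inv with h | h
    · exact .inr (measure_eq_zero_iff_ae_notMem.1 h)
    · exact .inl ((prob_compl_eq_zero_iff hB).2 h)

variable (G) in
theorem exists_ae_eq_const_of_forall_smul_ae_eq [SMul G X] [ErgodicSMul G X μ]
    {Y : Type*} [Nonempty Y] [MeasurableSpace Y] [MeasurableSpace.CountablySeparated Y]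
    {f : X → Y} (hf : NullMeasurable f μ) (hinv : ∀ g : G, ∀ᵐ x ∂μ, f (g • x) = f x) :
    ∃ c, ∀ᵐ x ∂μ, f x = c := by
  refine exists_eventuallyEq_const_of_forall_separating MeasurableSet fun U hU => ?_
  refine eventuallyConst_set.1 (aeconst_of_forall_preimage_smul_ae_eq G (hf hU) fun g => ?_)
  filter_upwards [hinv g] with x hx
  exact congrArg (· ∈ U) hx

variable [SMul G X] [ErgodicSMul G X μ] {A : Type*} [AddCommGroup A] [TopologicalSpace A]
  [IsTopologicalAddGroup A] [PolishSpace A] [MeasurableSpace A] [BorelSpace A]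
  {K : AddSubgroup A} {β : X → A}

theorem exists_ae_sub_mem_of_smul_sub_mem (hK : IsClosed (K : Set A)) (hβ : Measurable β)
    (hβK : ∀ g : G, ∀ᵐ x ∂μ, β (g • x) - β x ∈ K) : ∃ b, ∀ᵐ x ∂μ, β x - b ∈ K := by
  have : IsClosed (K : Set A) := hK
  obtain ⟨c, hc⟩ := exists_ae_eq_const_of_forall_smul_ae_eq G (μ := μ)
    (f := fun x => (β x : A ⧸ K))
    (QuotientAddGroup.continuous_mk.measurable.comp hβ).nullMeasurable fun g => by
      filter_upwards [hβK g] with x hx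
      exact QuotientAddGroup.eq_iff_sub_mem.2 hx
  obtain ⟨b, rfl⟩ := QuotientAddGroup.mk_surjective c
  exact ⟨b, hc.mono fun x hx => QuotientAddGroup.eq_iff_sub_mem.1 hx⟩

theorem exists_measurable_mem_of_smul_sub_mem (hK : IsClosed (K : Set A)) (hβ : Measurable β)
    (hβK : ∀ g : G, ∀ᵐ x ∂μ, β (g • x) - β x ∈ K) :
    ∃ β' : X → A, Measurable β' ∧ (∀ x, β' x ∈ K) ∧
      ∀ g : G, ∀ᵐ x ∂μ, β' (g • x) - β' x = β (g • x) - β x := by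
  obtain ⟨b, hb⟩ := exists_ae_sub_mem_of_smul_sub_mem hK hβ hβK
  obtain ⟨β', hβ', hβ'K, hβ'_eq⟩ :=
    (hβ.sub_const b).aemeasurable.exists_ae_eq_range_subset hb ⟨0, K.zero_mem⟩
  refine ⟨β', hβ', fun x => hβ'K (Set.mem_range_self x), fun g => ?_⟩
  filter_upwards [hβ'_eq, (tendsto_smul_ae μ g).eventually hβ'_eq] with x hx hgx
  rw [← hx, ← hgx, sub_sub_sub_cancel_right]

end Ergodicity

section Lp

variable {X Y E : Type*} [MeasurableSpace X] [MeasurableSpace Y] {μ : Measure X} {ν : Measure Y}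
  [NormedAddCommGroup E]

theorem norm_sq_eq_integral_norm_sq (f : Lp E 2 μ) : ‖f‖ ^ 2 = ∫ x, ‖f x‖ ^ 2 ∂μ := by
  rw [Lp.norm_def, (Lp.memLp f).eLpNorm_eq_integral_rpow_norm two_ne_zero ENNReal.ofNat_ne_top,
    ENNReal.toReal_ofReal (by positivity), ENNReal.toReal_ofNat, ← one_div, ← Real.sqrt_eq_rpow,
    Real.sq_sqrt (by positivity)]
  simp only [Real.rpow_two]

variable [NormedSpace ℂ E] {p : ℝ≥0∞} {τ : X → Y} {w : X → Circle}

theorem memLp_circle_smul_comp (hτ : MeasurePreserving τ μ ν) (hw : AEStronglyMeasurable w μ)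
    {f : Y → E} (hf : MemLp f p ν) : MemLp (fun x => w x • f (τ x)) p μ := by
  have hfτ : MemLp (f ∘ τ) p μ := hf.comp_measurePreserving hτ
  exact hfτ.congr_norm (hw.smul hfτ.1) (ae_of_all _ fun x => (Circle.norm_smul _ _).symm)

variable [Fact (1 ≤ p)]

/-- The weighted composition operator `f ↦ w · (f ∘ τ)` between `Lᵖ` spaces, for a
measure-preserving map `τ` and a weight `w` of modulus one. -/
noncomputable def weightedComp (hτ : MeasurePreserving τ μ ν) (hw : AEStronglyMeasurable w μ) :
    Lp E p ν →ₗᵢ[ℂ] Lp E p μ where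
  toFun f := (memLp_circle_smul_comp hτ hw (Lp.memLp f)).toLp _
  map_add' f g := by
    rw [← MemLp.toLp_add, MemLp.toLp_eq_toLp_iff]
    filter_upwards [hτ.quasiMeasurePreserving.ae (Lp.coeFn_add f g)] with x hx
    simp only [hx, Pi.add_apply, smul_add]
  map_smul' c f := by
    rw [RingHom.id_apply, ← MemLp.toLp_const_smul, MemLp.toLp_eq_toLp_iff]
    filter_upwards [hτ.quasiMeasurePreserving.ae (Lp.coeFn_smul c f)] with x hx
    simp only [hx, Pi.smul_apply, smul_comm c]
  norm_map' f := by
    simp only [LinearMap.coe_mk, AddHom.coe_mk]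
    rw [Lp.norm_toLp, Lp.norm_def, ← eLpNorm_comp_measurePreserving (Lp.memLp f).1 hτ,
      eLpNorm_congr_norm_ae (ae_of_all _ fun x => Circle.norm_smul (w x) (f (τ x)))]
    rfl

theorem coeFn_weightedComp (hτ : MeasurePreserving τ μ ν) (hw : AEStronglyMeasurable w μ)
    (f : Lp E p ν) : weightedComp hτ hw f =ᵐ[μ] fun x => w x • f (τ x) :=
  MemLp.coeFn_toLp (memLp_circle_smul_comp hτ hw (Lp.memLp f))

end Lp

section IsometricRepresentation

variable {G R E : Type*} [Group G] [Ring R] [NormedAddCommGroup E] [Module R E]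

/-- An isometric representation of a group on `E`, with its values seen as invertible isometries. -/
noncomputable def isometryEquivHom (π : G →* (E →ₗᵢ[R] E)) : G →* (E ≃ₗᵢ[R] E) where
  toFun g := LinearIsometryEquiv.ofSurjective (π g) fun v => ⟨π g⁻¹ v, by
    rw [← Function.comp_apply (f := π g), ← LinearIsometry.coe_mul, ← map_mul, mul_inv_cancel,
      map_one, LinearIsometry.coe_one, id]⟩
  map_one' := by
    ext v
    exact DFunLike.congr_fun (map_one π) v
  map_mul' g h := by
    ext v
    exact DFunLike.congr_fun (map_mul π g h) v

theorem norm_inv_apply_sub_self (π : G →* (E ≃ₗᵢ[R] E)) (g : G) (v : E) :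
    ‖π g⁻¹ v - v‖ = ‖π g v - v‖ := by
  have hcancel : π g (π g⁻¹ v) = v := by
    rw [← Function.comp_apply (f := π g), ← LinearIsometryEquiv.coe_mul, ← map_mul, mul_inv_cancel,
      map_one, LinearIsometryEquiv.coe_one, id]
  rw [← (π g).norm_map, map_sub, hcancel, norm_sub_rev]

end IsometricRepresentation

section TwistedKoopman

variable {G X : Type*} [Group G] [MeasurableSpace X] [MulAction G X] {μ : Measure X}

/-- Measurable 1-cocycles, defined on the whole group, over an action of `G` with values in a group
written multiplicatively. Measurability is meant modulo null sets, and the order of the factors is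
that of `cocycleSum`. -/
structure IsMulCocycle {A : Type*} [TopologicalSpace A] [Mul A] (μ : Measure X)
    (a : G → X → A) : Prop where
  aestronglyMeasurable (g : G) : AEStronglyMeasurable (a g) μ
  map_mul (g h : G) : ∀ᵐ x ∂μ, a (g * h) x = a h x * a g (h • x)

theorem IsMulCocycle.map_one {A : Type*} [TopologicalSpace A] [Group A] {a : G → X → A}
    (ha : IsMulCocycle μ a) : ∀ᵐ x ∂μ, a 1 x = 1 := by
  filter_upwards [ha.map_mul 1 1] with x hx
  rwa [mul_one, one_smul, left_eq_mul] at hx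

variable [MeasurableConstSMul G X] [SMulInvariantMeasure G X μ] {E : Type*}
  [NormedAddCommGroup E] [NormedSpace ℂ E] {p : ℝ≥0∞} [Fact (1 ≤ p)] {a : G → X → Circle}

/-- The Koopman representation on `Lᵖ(μ)` twisted by a circle-valued cocycle `a`:
`(π(g) f)(x) = a(g⁻¹, x) f(g⁻¹ x)`. -/
noncomputable def twistedKoopman (ha : IsMulCocycle μ a) :
    G →* (Lp E p μ →ₗᵢ[ℂ] Lp E p μ) where
  toFun g := weightedComp (measurePreserving_smul g⁻¹ μ) (ha.aestronglyMeasurable g⁻¹)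
  map_one' := by
    ext1 f
    refine Lp.ext ((coeFn_weightedComp _ _ f).trans ?_)
    filter_upwards [ha.map_one] with x hx
    rw [inv_one, hx, one_smul, one_smul, LinearIsometry.coe_one, id]
  map_mul' g h := by
    ext1 f
    have hcoe (k : G) := coeFn_weightedComp (E := E) (p := p) (measurePreserving_smul k μ)
      (ha.aestronglyMeasurable k)
    refine Lp.ext ((hcoe (g * h)⁻¹ f).trans (.trans ?_ (hcoe g⁻¹ _).symm))
    filter_upwards [ha.map_mul h⁻¹ g⁻¹, (tendsto_smul_ae μ g⁻¹).eventually (hcoe h⁻¹ f)]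
      with x hmul hx
    rw [LinearIsometry.coe_toLinearMap, hx, mul_inv_rev, hmul, mul_smul, mul_smul]

theorem coeFn_twistedKoopman (ha : IsMulCocycle μ a) (g : G) (f : Lp E p μ) :
    twistedKoopman ha g f =ᵐ[μ] fun x => a g⁻¹ x • f (g⁻¹ • x) :=
  coeFn_weightedComp (measurePreserving_smul g⁻¹ μ) (ha.aestronglyMeasurable g⁻¹) f

theorem norm_twistedKoopman_const_one_sub_sq [IsFiniteMeasure μ] (ha : IsMulCocycle μ a) (g : G) :
    ‖twistedKoopman ha g (Lp.const 2 μ (1 : ℂ)) - Lp.const 2 μ 1‖ ^ 2 =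
      ∫ x, ‖(a g⁻¹ x : ℂ) - 1‖ ^ 2 ∂μ := by
  rw [norm_sq_eq_integral_norm_sq]
  refine integral_congr_ae ?_
  have hone := Lp.coeFn_const 2 μ (1 : ℂ)
  filter_upwards [Lp.coeFn_sub (twistedKoopman ha g (Lp.const 2 μ (1 : ℂ))) (Lp.const 2 μ 1),
    coeFn_twistedKoopman ha g (Lp.const 2 μ (1 : ℂ)), hone,
    (tendsto_smul_ae μ g⁻¹).eventually hone] with x hsub hπ hx hgx
  rw [hsub, Pi.sub_apply, hπ, hx, hgx, Function.const_apply, Function.const_apply,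
    Circle.smul_def, smul_eq_mul, mul_one]

end TwistedKoopman

section PropertyT

variable {G : Type*} [Group G]

/-- `(S, c)` is a Kazhdan pair: `c` is a Kazhdan constant for `S`, as tested on the unitary
representations on Hilbert spaces in the universe `u`. `HasPropertyT G S` asks for some
`c > 0` such that this holds in the universe `0`. -/
def IsKazhdanPair (S : Finset G) (c : ℝ) : Prop :=
  ∀ (H : Type u) (_ : NormedAddCommGroup H) (_ : InnerProductSpace ℂ H) (_ : CompleteSpace H),
    ∀ π : G →* (H ≃ₗᵢ[ℂ] H),
      (∃ v : H, ‖v‖ = 1 ∧ ∀ s ∈ S, ‖π s v - v‖ ≤ c) →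
      ∃ w : H, w ≠ 0 ∧ ∀ g : G, π g w = w

theorem circleExp_arg_mul (z : Circle) {w : ℂ} (hw : w ≠ 0) :
    Circle.exp (z * w).arg = z * Circle.exp w.arg := by
  have hnorm : (‖w‖ : ℂ) ≠ 0 := by simpa using hw
  refine Circle.ext (mul_left_cancel₀ hnorm ?_)
  calc (‖w‖ : ℂ) * Circle.exp (z * w).arg
      = ‖z * w‖ * Complex.exp ((z * w).arg * Complex.I) := by
        rw [norm_mul, Circle.norm_coe, one_mul, Circle.coe_exp]
    _ = z * (‖w‖ * Complex.exp (w.arg * Complex.I)) := by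
      rw [Complex.norm_mul_exp_arg_mul_I, Complex.norm_mul_exp_arg_mul_I]
    _ = ‖w‖ * (z * Circle.exp w.arg : Circle) := by
      rw [Circle.coe_mul, Circle.coe_exp, mul_left_comm]

variable {X : Type u} [MeasurableSpace X] [MulAction G X] {μ : Measure X} {a : G → X → Circle}

theorem exists_transfer_of_ne_zero [SMulInvariantMeasure G X μ] {f : X → ℂ} (hf : Measurable f)
    (hf_ne : ∀ᵐ x ∂μ, f x ≠ 0) (hfa : ∀ g : G, ∀ᵐ x ∂μ, f x = a g x * f (g • x)) :
    ∃ φ : X → Circle, StronglyMeasurable φ ∧ ∀ g : G, ∀ᵐ x ∂μ, a g x = φ (g • x) / φ x := by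
  refine ⟨fun x => (Circle.exp (f x).arg)⁻¹,
    (Circle.exp.continuous.comp_stronglyMeasurable
      (Complex.measurable_arg.comp hf).stronglyMeasurable).inv, fun g => ?_⟩
  filter_upwards [hfa g, (tendsto_smul_ae μ g).eventually hf_ne] with x hx hgx
  rw [hx, circleExp_arg_mul _ hgx, div_inv_eq_mul, mul_left_comm, inv_mul_cancel, mul_one]

theorem ae_ne_zero_of_ergodicSMul [ErgodicSMul G X μ] {f : X → ℂ} (hf : Measurable f)
    (hfa : ∀ g : G, ∀ᵐ x ∂μ, f x = a g x * f (g • x)) (hf_ne : ¬ f =ᵐ[μ] 0) :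
    ∀ᵐ x ∂μ, f x ≠ 0 := by
  have hconst : EventuallyConst (f ⁻¹' {0}) (ae μ) :=
    aeconst_of_forall_preimage_smul_ae_eq G (hf (measurableSet_singleton 0)).nullMeasurableSet
      fun g => by
        filter_upwards [hfa g] with x hx
        refine propext (?_ : f (g • x) = 0 ↔ f x = 0)
        rw [hx, mul_eq_zero, or_iff_right (Circle.coe_ne_zero _)]
  exact (eventuallyConst_set.1 hconst).resolve_left hf_ne

theorem IsKazhdanPair.exists_ae_eq_mul_smul [MeasurableConstSMul G X] [SMulInvariantMeasure G X μ]
    [IsProbabilityMeasure μ] {S : Finset G} {c : ℝ} (hS : IsKazhdanPair.{u} S c) (hc : 0 ≤ c)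
    (ha : IsMulCocycle μ a) (hsmall : ∀ s ∈ S, ∫ x, ‖(a s x : ℂ) - 1‖ ^ 2 ∂μ ≤ c ^ 2) :
    ∃ f : X → ℂ, Measurable f ∧ ¬ f =ᵐ[μ] 0 ∧ ∀ g : G, ∀ᵐ x ∂μ, f x = a g x * f (g • x) := by
  let π := isometryEquivHom (twistedKoopman (E := ℂ) (p := 2) ha)
  let one : Lp ℂ 2 μ := Lp.const 2 μ 1
  have hone : ‖one‖ = 1 := by simp [one, Lp.norm_const']
  have halmost : ∀ s ∈ S, ‖π s one - one‖ ≤ c := fun s hs => by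
    rw [← norm_inv_apply_sub_self]
    refine le_of_sq_le_sq ?_ hc
    refine (norm_twistedKoopman_const_one_sub_sq ha s⁻¹).trans_le ?_
    simpa only [inv_inv] using hsmall s hs
  obtain ⟨f, hf_ne, hf_inv⟩ := hS (Lp ℂ 2 μ) inferInstance inferInstance inferInstance π
    ⟨one, hone, halmost⟩
  refine ⟨f, (Lp.stronglyMeasurable f).measurable, fun hf => hf_ne ?_, fun g => ?_⟩
  · exact Lp.ext (hf.trans (Lp.coeFn_zero ℂ 2 μ).symm)
  · have hg : twistedKoopman ha g⁻¹ f = f := hf_inv g⁻¹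
    have hcoe := coeFn_twistedKoopman ha g⁻¹ f
    rwa [hg, inv_inv] at hcoe

theorem IsKazhdanPair.exists_transfer [MeasurableConstSMul G X] [ErgodicSMul G X μ]
    [IsProbabilityMeasure μ] {S : Finset G} {c : ℝ} (hS : IsKazhdanPair.{u} S c) (hc : 0 ≤ c)
    (ha : IsMulCocycle μ a) (hsmall : ∀ s ∈ S, ∫ x, ‖(a s x : ℂ) - 1‖ ^ 2 ∂μ ≤ c ^ 2) :
    ∃ φ : X → Circle, StronglyMeasurable φ ∧ ∀ g : G, ∀ᵐ x ∂μ, a g x = φ (g • x) / φ x := by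
  obtain ⟨f, hf, hf_ne, hfa⟩ := hS.exists_ae_eq_mul_smul hc ha hsmall
  exact exists_transfer_of_ne_zero hf (ae_ne_zero_of_ergodicSMul hf hfa hf_ne) hfa

end PropertyT

section UnitAddCircle

theorem norm_toCircle_sub_one_le (t : UnitAddCircle) :
    ‖(AddCircle.toCircle t : ℂ) - 1‖ ≤ 2 * Real.pi * ‖t‖ := by
  rw [← div_le_iff₀' Real.two_pi_pos]
  refine QuotientAddGroup.le_norm_iff.2 ?_
  rintro x rfl
  rw [div_le_iff₀' Real.two_pi_pos]
  calc ‖(AddCircle.toCircle (x : UnitAddCircle) : ℂ) - 1‖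
      = ‖Complex.exp (Complex.I * (2 * Real.pi * x : ℝ)) - 1‖ := by
        rw [AddCircle.toCircle_apply_mk, Circle.coe_exp, div_one, mul_comm Complex.I]
    _ ≤ ‖2 * Real.pi * x‖ := Real.norm_exp_I_mul_ofReal_sub_one_le
    _ = 2 * Real.pi * ‖x‖ := by rw [norm_mul, Real.norm_of_nonneg Real.two_pi_pos.le]

theorem norm_toCircle_sub_one_sq_le (t : UnitAddCircle) :
    ‖(AddCircle.toCircle t : ℂ) - 1‖ ^ 2 ≤ 4 * Real.pi * ‖t‖ := by
  have hle_two : ‖(AddCircle.toCircle t : ℂ) - 1‖ ≤ 2 := by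
    refine (norm_sub_le _ _).trans_eq ?_
    rw [Circle.norm_coe, norm_one, one_add_one_eq_two]
  calc ‖(AddCircle.toCircle t : ℂ) - 1‖ ^ 2
      ≤ 2 * (2 * Real.pi * ‖t‖) := by
        rw [sq]
        exact mul_le_mul hle_two (norm_toCircle_sub_one_le t) (norm_nonneg _) zero_le_two
    _ = 4 * Real.pi * ‖t‖ := by ring

theorem integral_norm_toCircle_sub_one_sq_le {X : Type*} [MeasurableSpace X] {μ : Measure X}
    [IsFiniteMeasure μ] {t : X → UnitAddCircle} (ht : AEStronglyMeasurable t μ) :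
    ∫ x, ‖(AddCircle.toCircle (t x) : ℂ) - 1‖ ^ 2 ∂μ ≤ 4 * Real.pi * ∫ x, ‖t x‖ ∂μ := by
  have hint : Integrable (fun x => ‖t x‖) μ :=
    .of_bound ht.norm (1 / 2) (ae_of_all _ fun x => by
      simpa using AddCircle.norm_le_half_period (1 : ℝ) (x := t x) one_ne_zero)
  rw [← integral_const_mul]
  exact integral_mono_of_nonneg (ae_of_all _ fun x => sq_nonneg _) (hint.const_mul _)
    (ae_of_all _ fun x => norm_toCircle_sub_one_sq_le (t x))

theorem IsKazhdanPair.exists_addCircle_transfer {G : Type*} [Group G] {X : Type u}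
    [MeasurableSpace X] [MulAction G X] {μ : Measure X} [MeasurableConstSMul G X]
    [ErgodicSMul G X μ] [IsProbabilityMeasure μ] {S : Finset G} {c : ℝ}
    (hS : IsKazhdanPair.{u} S c) (hc : 0 ≤ c) {a : G → X → UnitAddCircle}
    (ha : ∀ g, Measurable (a g))
    (ha_mul : ∀ g h : G, ∀ᵐ x ∂μ, a (g * h) x = a h x + a g (h • x))
    (hsmall : ∀ s ∈ S, ∫ x, ‖a s x‖ ∂μ ≤ c ^ 2 / (4 * Real.pi)) :
    ∃ β : X → UnitAddCircle, Measurable β ∧ ∀ g : G, ∀ᵐ x ∂μ, a g x = β (g • x) - β x := by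
  have hcocycle : IsMulCocycle μ fun g x => AddCircle.toCircle (a g x) :=
    ⟨fun g => AddCircle.continuous_toCircle.comp_aestronglyMeasurable
      (ha g).aestronglyMeasurable, fun g h =>
        (ha_mul g h).mono fun x hx => by simp only [hx, AddCircle.toCircle_add]⟩
  obtain ⟨φ, hφ, hφa⟩ := hS.exists_transfer hc hcocycle fun s hs =>
    (integral_norm_toCircle_sub_one_sq_le (ha s).aestronglyMeasurable).trans
      ((le_div_iff₀' (by positivity)).1 (hsmall s hs))
  let e : UnitAddCircle ≃ₜ Circle := AddCircle.homeomorphCircle one_ne_zero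
  have he : ∀ z, AddCircle.toCircle (e.symm z) = z := fun z => by
    rw [← AddCircle.homeomorphCircle_apply one_ne_zero, e.apply_symm_apply]
  refine ⟨fun x => e.symm (φ x), (e.symm.continuous.comp_stronglyMeasurable hφ).measurable,
    fun g => ?_⟩
  filter_upwards [hφa g] with x hx
  refine AddCircle.injective_toCircle one_ne_zero ?_
  rw [hx, sub_eq_add_neg, AddCircle.toCircle_add, AddCircle.toCircle_neg, he, he, div_eq_mul_inv]

end UnitAddCircle

theorem small_cocycles_are_coboundaries_general {G : Type*} [Group G] {S : Finset G}
    (hgen : Submonoid.closure (S : Set G) = ⊤) {c : ℝ} (hc : 0 ≤ c) (hS : IsKazhdanPair.{u} S c)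
    {X : Type u} [MeasurableSpace X] {μ : Measure X} [IsProbabilityMeasure μ] {T : G → X → X}
    (hT : IsMPAction T μ) (hE : IsErgodicAction T μ) {K : AddSubgroup UnitAddCircle}
    (hK : IsClosed (K : Set UnitAddCircle)) {α : G → X → UnitAddCircle}
    (hα : IsCocycle S T μ K α) (hsmall : ∀ s ∈ S, ∫ x, ‖α s x‖ ∂μ ≤ c ^ 2 / (4 * Real.pi)) :
    ∃ β : X → UnitAddCircle, Measurable β ∧ (∀ x, β x ∈ K) ∧
      ∀ s ∈ S, ∀ᵐ x ∂μ, α s x = β (T s x) - β x := by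
  have := countable_of_submonoidClosure_eq_top hgen
  let := hT.mulAction
  have : MeasurableConstSMul G X := ⟨hT.1⟩
  have : SMulInvariantMeasure G X μ := ⟨fun g _ hA =>
    (⟨hT.1 g, hT.2.1 g⟩ : MeasurePreserving (T g) μ μ).measure_preimage hA.nullMeasurableSet⟩
  have : ErgodicSMul G X μ := hE.ergodicSMul
  obtain ⟨a, ha, haK, ha_mul, haα⟩ := hα.exists_extension hgen hT
  obtain ⟨γ, hγ, hγa⟩ := hS.exists_addCircle_transfer hc ha ha_mul fun s hs =>
    (integral_congr_ae ((haα s hs).fun_comp norm)).trans_le (hsmall s hs)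
  obtain ⟨β, hβ, hβK, hβγ⟩ := exists_measurable_mem_of_smul_sub_mem hK hγ fun g =>
    (hγa g).mono fun x hx => hx ▸ haK g x
  refine ⟨β, hβ, hβK, fun s hs => ?_⟩
  filter_upwards [haα s hs, hγa s, hβγ s] with x hαx hγx hβx
  exact hαx.symm.trans (hγx.trans hβx.symm)

/-- **(Schmidt, Zimmer.)**  If `G` has property (T) with respect to the finite symmetric
generating set `S`, then there is `r > 0` such that over every ergodic `G`-system, every
`K`-valued 1-cocycle `α` with `‖α‖_{μ,S} ≤ r` is a coboundary, for every closed subgroup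
`K ≤ 𝕋`. -/
theorem small_cocycles_are_coboundaries {G : Type*} [Group G] (S : Finset G)
    (hsym : ∀ s ∈ S, s⁻¹ ∈ S) (hgen : Subgroup.closure (S : Set G) = ⊤)
    (hT : HasPropertyT G S) :
    ∃ r : ℝ, 0 < r ∧
      ∀ (X : Type) (_ : MeasurableSpace X) (_ : StandardBorelSpace X) (μ : Measure X),
        IsProbabilityMeasure μ →
        ∀ T : G → X → X, IsMPAction T μ → IsErgodicAction T μ →
          ∀ K : AddSubgroup UnitAddCircle, IsClosed (K : Set UnitAddCircle) →
            ∀ α : G → X → UnitAddCircle, IsCocycle S T μ K α →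
              (∑ s ∈ S, ∫ x, ‖α s x‖ ∂μ) ≤ r →
              ∃ β : X → UnitAddCircle, Measurable β ∧ (∀ x, β x ∈ K) ∧
                ∀ s ∈ S, ∀ᵐ x ∂μ, α s x = β (T s x) - β x := by
  obtain ⟨c, hc, hS⟩ := hT
  refine ⟨c ^ 2 / (4 * Real.pi), by positivity, fun X _ _ μ _ T hT hE K hK α hα hsmall => ?_⟩
  exact small_cocycles_are_coboundaries_general (submonoidClosure_eq_top_of_inv_mem hsym hgen)
    hc.le hS hT hE hK hα fun s hs => (Finset.single_le_sum
      (fun t _ => integral_nonneg fun x => norm_nonneg (α t x)) hs).trans hsmall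
end

section
/- Let G be a countably infinite, residually finite group. Then there is a descending sequence G_1 > G_2 > … of finite-index subgroups of G such that: (i) each abelianization G_n/[G_n, G_n] is nontrivial; and (ii) the left-multiplication actions σ_n : G → Sym(G/G_n) form a sofic approximation to G. -/
open Filter Topology

/-- A sofic approximation to `G`: asymptotically multiplicative and asymptotically free
sequences of maps into symmetric groups of nonempty finite sets. -/
def IsSoficApprox {G : Type*} [Group G] (V : ℕ → Type*) (σ : ∀ n, G → Equiv.Perm (V n)) : Prop :=
  (∀ g h : G, Tendsto
      (fun n => (Nat.card {v : V n // σ n g (σ n h v) = σ n (g * h) v} : ℝ) / (Nat.card (V n) : ℝ))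
      atTop (𝓝 1)) ∧
  ∀ g : G, g ≠ 1 → Tendsto
      (fun n => (Nat.card {v : V n // σ n g v ≠ v} : ℝ) / (Nat.card (V n) : ℝ))
      atTop (𝓝 1)

/-- `G` is residually finite: every nonidentity element avoids some finite-index subgroup. -/
def ResiduallyFinite (G : Type*) [Group G] : Prop :=
  ∀ g : G, g ≠ 1 → ∃ H : Subgroup G, H.FiniteIndex ∧ g ∉ H

/-!
In a strictly descending chain `N n` of finite-index normal subgroups with trivial intersection,
pick `x ∈ N n` outside `N (n + 1)` and put `L n = N (n + 1) ⊔ ⟨x⟩`. Then `N (n + 1) < L n ≤ N n`,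
so the `L n` again descend strictly, and `L n` maps onto the nontrivial cyclic group
`L n / N (n + 1)`. Any `g ≠ 1` eventually leaves `N n`; since `N n` is normal and contains `L n`,
`g` then fixes no coset of `L n`, so the coset actions are eventually free.
-/

theorem tendsto_natCard_subtype_div_natCard_one {ι : Type*} {l : Filter ι} {V : ι → Type*}
    [∀ i, Finite (V i)] [∀ i, Nonempty (V i)] {p : ∀ i, V i → Prop} (hp : ∀ᶠ i in l, ∀ v, p i v) :
    Tendsto (fun i => (Nat.card {v : V i // p i v} : ℝ) / (Nat.card (V i) : ℝ)) l (𝓝 1) := by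
  refine tendsto_const_nhds.congr' ?_
  filter_upwards [hp] with i hi
  rw [Nat.card_congr (Equiv.subtypeUnivEquiv hi), div_self]
  exact Nat.cast_ne_zero.2 Nat.card_pos.ne'

theorem isSoficApprox_toPerm {G : Type*} [Group G] {V : ℕ → Type*} [∀ n, MulAction G (V n)]
    [∀ n, Finite (V n)] [∀ n, Nonempty (V n)]
    (hfree : ∀ g : G, g ≠ 1 → ∀ᶠ n in atTop, ∀ v : V n, g • v ≠ v) :
    IsSoficApprox V (fun n g => MulAction.toPerm (α := G) (β := V n) g) :=
  ⟨fun g h => tendsto_natCard_subtype_div_natCard_one <| .of_forall fun _ v =>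
      (mul_smul g h v).symm,
    fun g hg => tendsto_natCard_subtype_div_natCard_one (hfree g hg)⟩

theorem exists_strictMono_strictAnti_comp {α : Type*} [Preorder α] {f : ℕ → α} (hf : Antitone f)
    (hdrop : ∀ n, ∃ m, ¬ f n ≤ f m) : ∃ φ : ℕ → ℕ, StrictMono φ ∧ StrictAnti (f ∘ φ) := by
  obtain ⟨φ, hdec | hnondec⟩ := exists_increasing_or_nonincreasing_subseq (· > ·) f
  · exact ⟨φ, φ.strictMono, fun m n => hdec m n⟩
  · obtain ⟨m, hm⟩ := hdrop (φ 0)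
    have hlt : f (φ (m + 1)) < f (φ 0) :=
      (hf (φ.monotone (Nat.zero_le _))).lt_of_not_ge fun h =>
        hm (h.trans (hf (m.le_succ.trans φ.strictMono.le_apply)))
    exact absurd hlt (hnondec 0 (m + 1) m.succ_pos)

section Subgroups

variable {G : Type*} [Group G]

theorem smul_quotient_ne_of_notMem_normal {L N : Subgroup G} [hN : N.Normal] (hLN : L ≤ N) {g : G}
    (hg : g ∉ N) (v : G ⧸ L) : g • v ≠ v := by
  induction v using QuotientGroup.induction_on with
  | H y =>
    intro hv
    have hconj : y⁻¹ * (g * y) ∈ N := hLN (QuotientGroup.eq.1 hv.symm)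
    exact hg (by simpa only [mul_inv_cancel_right] using hN.mem_comm hconj)

theorem nontrivial_abelianization_of_apply_ne_one {A : Type*} [CommGroup A] (f : G →* A) {x : G}
    (hx : f x ≠ 1) : Nontrivial (Abelianization G) :=
  ⟨Abelianization.of x, 1, fun h => hx (by rw [← Abelianization.lift_apply_of f, h, map_one])⟩

open scoped IsMulCommutative in
theorem nontrivial_abelianization_sup_zpowers {N : Subgroup G} [N.Normal] {x : G} (hx : x ∉ N) :
    Nontrivial (Abelianization ↥(N ⊔ Subgroup.zpowers x)) := by
  let π := QuotientGroup.mk' N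
  have hle : N ⊔ Subgroup.zpowers x ≤ (Subgroup.zpowers (π x)).comap π := by
    rw [← MonoidHom.map_zpowers, Subgroup.comap_map_eq, QuotientGroup.ker_mk', sup_comm]
  let f : ↥(N ⊔ Subgroup.zpowers x) →* Subgroup.zpowers (π x) :=
    (π.comp (Subgroup.subtype _)).codRestrict _ fun y => hle y.2
  have hxL : x ∈ N ⊔ Subgroup.zpowers x := Subgroup.mem_sup_right (Subgroup.mem_zpowers x)
  refine nontrivial_abelianization_of_apply_ne_one f (x := ⟨x, hxL⟩) fun h => hx ?_
  exact (QuotientGroup.eq_one_iff x).1 (congrArg Subtype.val h)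

theorem exists_nontrivial_abelianization_between {N K : Subgroup G} [N.Normal] (hNK : N < K) :
    ∃ L : Subgroup G, N < L ∧ L ≤ K ∧ Nontrivial (Abelianization L) := by
  obtain ⟨x, hxK, hxN⟩ := SetLike.exists_of_lt hNK
  exact ⟨N ⊔ Subgroup.zpowers x, left_lt_sup.2 (by rwa [Subgroup.zpowers_le]),
    sup_le hNK.le (Subgroup.zpowers_le.2 hxK), nontrivial_abelianization_sup_zpowers hxN⟩

theorem exists_antitone_normal_finiteIndex_iInf_eq_bot (K : ℕ → Subgroup G)
    [∀ n, (K n).FiniteIndex] (hK : ⨅ n, K n = ⊥) :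
    ∃ N : ℕ → Subgroup G, Antitone N ∧ (∀ n, (N n).Normal) ∧ (∀ n, (N n).FiniteIndex) ∧
      ⨅ n, N n = ⊥ := by
  have hfin (n : ℕ) : (⨅ i ∈ Finset.range n, K i).FiniteIndex :=
    Subgroup.finiteIndex_iInf' K fun _ _ => inferInstance
  refine ⟨fun n => (⨅ i ∈ Finset.range n, K i).normalCore, fun m n hmn => ?_,
    fun _ => inferInstance, fun _ => inferInstance, ?_⟩
  · exact Subgroup.normalCore_mono (biInf_mono (Finset.range_mono hmn))
  · refine le_bot_iff.1 (hK ▸ le_iInf fun n => ?_)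
    exact (iInf_le _ (n + 1)).trans <|
      (Subgroup.normalCore_le _).trans (biInf_le K (Finset.self_mem_range_succ n))

theorem exists_strictAnti_normal_finiteIndex_iInf_eq_bot [Infinite G] (K : ℕ → Subgroup G)
    [∀ n, (K n).FiniteIndex] (hK : ⨅ n, K n = ⊥) :
    ∃ N : ℕ → Subgroup G, StrictAnti N ∧ (∀ n, (N n).Normal) ∧ (∀ n, (N n).FiniteIndex) ∧
      ⨅ n, N n = ⊥ := by
  obtain ⟨N, hanti, hnormal, hfin, hbot⟩ := exists_antitone_normal_finiteIndex_iInf_eq_bot K hK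
  have hne (n : ℕ) : N n ≠ ⊥ := fun h =>
    (hfin n).index_ne_zero (by rw [h, Subgroup.index_bot, Nat.card_eq_zero_of_infinite])
  have hdrop (n : ℕ) : ∃ m, ¬ N n ≤ N m := by
    by_contra! h
    exact hne n (le_bot_iff.1 (hbot ▸ le_iInf h))
  obtain ⟨φ, hφ, hstrict⟩ := exists_strictMono_strictAnti_comp hanti hdrop
  exact ⟨N ∘ φ, hstrict, fun n => hnormal (φ n), fun n => hfin (φ n),
    (hanti.iInf_comp_tendsto_atTop hφ.tendsto_atTop).trans hbot⟩

theorem ResiduallyFinite.exists_seq_finiteIndex_iInf_eq_bot [Countable G]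
    (hrf : ResiduallyFinite G) :
    ∃ K : ℕ → Subgroup G, (∀ n, (K n).FiniteIndex) ∧ ⨅ n, K n = ⊥ := by
  have hsep (g : G) : ∃ H : Subgroup G, H.FiniteIndex ∧ (g ∈ H → g = 1) := by
    by_cases hg : g = 1
    · exact ⟨⊤, inferInstance, fun _ => hg⟩
    · obtain ⟨H, hH, hgH⟩ := hrf g hg
      exact ⟨H, hH, fun h => absurd h hgH⟩
  choose H hfin hH using hsep
  obtain ⟨e, he⟩ := exists_surjective_nat G
  refine ⟨H ∘ e, fun n => hfin (e n), (he.iInf_comp H).trans ?_⟩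
  exact (Subgroup.eq_bot_iff_forall _).2 fun g hg => hH g (Subgroup.mem_iInf.1 hg g)

end Subgroups

theorem exists_descending_subgroups_sofic_general (G : Type*) [Group G] [Infinite G]
    (K : ℕ → Subgroup G) [∀ n, (K n).FiniteIndex] (hK : ⨅ n, K n = ⊥) :
    ∃ Gn : ℕ → Subgroup G,
      (∀ n, Gn (n + 1) < Gn n) ∧
      (∀ n, (Gn n).FiniteIndex) ∧
      (∀ n, Nontrivial (Abelianization ↥(Gn n))) ∧
      IsSoficApprox (fun n => G ⧸ Gn n)
        (fun n g => MulAction.toPerm (α := G) (β := G ⧸ Gn n) g) := by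
  obtain ⟨N, hanti, _, _, hbot⟩ := exists_strictAnti_normal_finiteIndex_iInf_eq_bot K hK
  choose L hNL hLN hab using
    fun n => exists_nontrivial_abelianization_between (hanti (Nat.lt_succ_self n))
  have hfin (n : ℕ) : (L n).FiniteIndex := Subgroup.finiteIndex_of_le (hNL n).le
  refine ⟨L, fun n => (hLN (n + 1)).trans_lt (hNL n), hfin, hab,
    isSoficApprox_toPerm fun g hg => ?_⟩
  obtain ⟨k, hgk⟩ : ∃ k, g ∉ N k := by
    by_contra! h
    exact hg (Subgroup.mem_bot.1 (hbot ▸ Subgroup.mem_iInf.2 h))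
  filter_upwards [eventually_ge_atTop k] with n hkn
  exact smul_quotient_ne_of_notMem_normal (hLN n) fun h => hgk (hanti.antitone hkn h)

/-- For a countably infinite residually finite group `G` there is a strictly descending sequence
of finite-index subgroups, each with nontrivial abelianization, whose left-multiplication
actions on the coset spaces form a sofic approximation to `G`. -/
theorem exists_descending_subgroups_sofic (G : Type*) [Group G] [Countable G] [Infinite G]
    (hrf : ResiduallyFinite G) :
    ∃ Gn : ℕ → Subgroup G,
      (∀ n, Gn (n + 1) < Gn n) ∧
      (∀ n, (Gn n).FiniteIndex) ∧
      (∀ n, Nontrivial (Abelianization ↥(Gn n))) ∧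
      IsSoficApprox (fun n => G ⧸ Gn n)
        (fun n g => MulAction.toPerm (α := G) (β := G ⧸ Gn n) g) := by
  obtain ⟨K, _, hK⟩ := hrf.exists_seq_finiteIndex_iInf_eq_bot
  exact exists_descending_subgroups_sofic_general G K hK
end
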